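/- Let X, Y ∈ ℝ^{m×n} satisfy XᵀY = 0 and XYᵀ = 0, and let 0 < p ≤ 1. Then ‖X + Y‖_p ≥ ‖X‖_p + ‖Y‖_p. -/

import Mathlib

/-!
Put `A = X Xᵀ` and `B = Y Yᵀ`. Orthogonality gives `A B = 0` and `(X + Y)(X + Y)ᵀ = A + B`, so that
`(t - A)(t - B) = t (t - (A + B))` over `ℝ[t]`. Taking determinants,
`χ_A χ_B = t ^ m χ_{A + B}`: up to zeros, the eigenvalues of `A + B` are those of `A` together with
those of `B`. As zeros do not contribute to `∑ σᵢ ^ p`, the `p`-th power of the quasi-norm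
is additive on `X`, `Y`, and the claim follows from `a ^ q + b ^ q ≤ (a + b) ^ q` for `q = 1 / p ≥ 1`.
-/

open scoped BigOperators
open Matrix

noncomputable def singVals {m n : ℕ} (X : Matrix (Fin m) (Fin n) ℝ) : Fin m → ℝ :=
  fun i => Real.sqrt ((Matrix.isHermitian_mul_conjTranspose_self X).eigenvalues i)

/-- The `p`-th power of the Schatten `p` quasi-norm: `‖X‖_p^p = ∑ σᵢ(X)^p`. -/
noncomputable def schattenPP {m n : ℕ} (p : ℝ) (X : Matrix (Fin m) (Fin n) ℝ) : ℝ :=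
  ∑ i, (singVals X i) ^ p

open Polynomial in
/-- For square matrices with `A * B = 0`, the eigenvalues of `A + B` are, up to zeros, those of `A`
and those of `B`, in the form of an identity of characteristic polynomials. -/
lemma charpoly_mul_charpoly_of_mul_eq_zero {m : ℕ} {A B : Matrix (Fin m) (Fin m) ℝ}
    (h : A * B = 0) : A.charpoly * B.charpoly = X ^ m * (A + B).charpoly := by
  have hAB : C.mapMatrix A * C.mapMatrix B = (0 : Matrix (Fin m) (Fin m) ℝ[X]) := by
    rw [← map_mul, h, map_zero]
  have key : A.charmatrix * B.charmatrix = (X : ℝ[X]) • (A + B).charmatrix := by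
    have hc : C.mapMatrix A * Matrix.scalar (Fin m) (X : ℝ[X])
        = Matrix.scalar (Fin m) (X : ℝ[X]) * C.mapMatrix A :=
      ((Matrix.scalar_commute (X : ℝ[X]) (fun r => mul_comm _ r) _).eq).symm
    have hs : (X : ℝ[X]) • (A + B).charmatrix
        = Matrix.scalar (Fin m) (X : ℝ[X]) * (A + B).charmatrix := by
      simp [Matrix.smul_eq_diagonal_mul]
    rw [hs, Matrix.charmatrix, Matrix.charmatrix, Matrix.charmatrix, sub_mul, mul_sub, mul_sub,
      hAB, hc, map_add, mul_sub, mul_add]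
    abel
  have := congrArg Matrix.det key
  rwa [Matrix.det_mul, Matrix.det_smul, Fintype.card_fin] at this

/-- Additivity over eigenvalues of any function vanishing at `0`. -/
lemma sum_eigenvalues_add_of_mul_eq_zero {m : ℕ} {A B S : Matrix (Fin m) (Fin m) ℝ}
    (hA : A.IsHermitian) (hB : B.IsHermitian) (hS : S.IsHermitian) (hAB : S = A + B)
    (h : A * B = 0) (f : ℝ → ℝ) (hf : f 0 = 0) :
    ∑ i, f (hS.eigenvalues i) = ∑ i, f (hA.eigenvalues i) + ∑ i, f (hB.eigenvalues i) := by
  subst hAB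
  have hr := congrArg Polynomial.roots (charpoly_mul_charpoly_of_mul_eq_zero h)
  rw [Polynomial.roots_mul (mul_ne_zero A.charpoly_monic.ne_zero B.charpoly_monic.ne_zero),
    Polynomial.roots_mul
      (mul_ne_zero (pow_ne_zero _ Polynomial.X_ne_zero) (A + B).charpoly_monic.ne_zero),
    Polynomial.roots_X_pow, hA.roots_charpoly_eq_eigenvalues, hB.roots_charpoly_eq_eigenvalues,
    hS.roots_charpoly_eq_eigenvalues] at hr
  have hsum := congrArg (fun s : Multiset ℝ => (s.map f).sum) hr
  simp [Multiset.map_nsmul, hf, Function.comp_def, Multiset.sum_nsmul, List.sum_ofFn] at hsum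
  exact hsum.symm

theorem schatten_p_quasinorm_superadditive_of_orthogonal
    (m n : ℕ) (hmn : m ≤ n) (p : ℝ) (hp : 0 < p) (hp1 : p ≤ 1)
    (X Y : Matrix (Fin m) (Fin n) ℝ)
    (h1 : Xᵀ * Y = 0) (h2 : X * Yᵀ = 0) :
    schattenPP p (X + Y) ^ ((1 : ℝ) / p) ≥
      schattenPP p X ^ ((1 : ℝ) / p) + schattenPP p Y ^ ((1 : ℝ) / p) := by
  have h3 : Y * Xᵀ = 0 := by
    simpa using congrArg Matrix.transpose h2
  have hadd : schattenPP p (X + Y) = schattenPP p X + schattenPP p Y := by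
    refine sum_eigenvalues_add_of_mul_eq_zero _ _ _ ?_ ?_ (fun x => Real.sqrt x ^ p) ?_
    · simp [Matrix.conjTranspose_eq_transpose_of_trivial, Matrix.add_mul, Matrix.mul_add, h2, h3]
    · rw [Matrix.conjTranspose_eq_transpose_of_trivial, Matrix.mul_assoc, ← Matrix.mul_assoc Xᵀ,
        h1, Matrix.zero_mul, Matrix.mul_zero]
    · simp [Real.zero_rpow hp.ne']
  have hnonneg (Z : Matrix (Fin m) (Fin n) ℝ) : 0 ≤ schattenPP p Z :=
    Finset.sum_nonneg fun i _ => Real.rpow_nonneg (Real.sqrt_nonneg _) p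
  rw [hadd]
  exact Real.add_rpow_le_rpow_add (hnonneg X) (hnonneg Y) ((one_le_div hp).2 hp1)
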